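/- Let q be a prime power and 4 ≤ h < k integers, D_1 = { x ∈ 𝔽_q^k \ {0} : (x_1+⋯+x_h)·x_1⋯x_h = 0 }, n = #D_1, and for α ∈ 𝔽_q^k let w(α) = #{ P ∈ D_1 : ⟨α,P⟩ ≠ 0 }. Then: (i) the set of α ∈ 𝔽_q^k having at least one nonzero coordinate among positions h+1, …, k has exactly q^k − q^h elements, and each such α satisfies w(α) = n − q^{k−h−1}(q^h + ψ_h − (q−1)^h) + 1; (ii) for every s ∈ {1, …, h}, every multiset of positive integers {r_1, …, r_l} with r_1 + ⋯ + r_l = s which is of type (i_1, …, i_j), the set of α ∈ 𝔽_q^k with α_m = 0 for all m > h, with exactly h − s zero coordinates among the first h, and whose nonzero coordinates take exactly l distinct values with multiplicity multiset {r_1, …, r_l}, has exactly C(h,s)·(s!/(r_1!⋯r_l!))·(l!/(i_1!⋯i_j!))·C(q−1,l) elements, and each such α satisfies w(α) = n − (q^{k−1} − (q−1)^{h−s}q^{k−h}ψ_s + q^{k−h}A_{r_1,…,r_l,h−s}) + 1. -/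

import Mathlib

/-- `ψ_s = ((q-1)^s + (-1)^s (q-1))/q` (an exact integer division). -/
def psi (q s : ℕ) : ℤ := (((q : ℤ) - 1) ^ s + (-1) ^ s * ((q : ℤ) - 1)) / (q : ℤ)

/-- `φ_s = ((q-1)^s - ψ_s)/(q-1)` (an exact integer division). -/
def phi (q s : ℕ) : ℤ := (((q : ℤ) - 1) ^ s - psi q s) / ((q : ℤ) - 1)

/-- Auxiliary recursion for `A_{r_1,…,r_l}`, taking the list in reversed order
`[r_l, r_{l-1}, …, r_1]`. -/
def Arev (q : ℕ) : List ℕ → ℤ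
  | [] => 0
  | [r] => psi q r
  | r :: rs => psi q rs.sum * phi q r + (-1) ^ r * Arev q rs

/-- `A_{r_1,…,r_l}` for the list `[r_1, …, r_l]`; appending a final entry `t`
(possibly `t = 0`) realizes `A_{r_1,…,r_l,t}`. -/
def Atup (q : ℕ) (l : List ℕ) : ℤ := Arev q l.reverse

/-!
The weight of `α` is governed by the number of zeros `y` of `(∑ y_i) ∏ y_i` on the hyperplane
`∑ α_i y_i = 0`. Such a zero either has a vanishing coordinate or lies in the torus `y_i ≠ 0` with
`∑ y_i = 0`, so only two torus counts are needed. The number of torus points with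
`∑ α_i y_i = 0` is `ψ` of the number of nonzero `α_i`, times `q - 1` for each zero one: the last
coordinate is determined by the others, which yields the recursion of `ψ`. To count the torus points
with `∑ y_i = ∑ α_i y_i = 0`, pick a value `x` of `α` and replace the second equation by
`∑ (α_i - x) y_i = 0`: it involves only the coordinates with `α_i ≠ x`, and the others are then
subject to a prescribed sum, which is zero exactly when the shorter vector solves the original
problem. This is the recursion of `A_{r_1,…,r_m}`, the last entry of the tuple being the number of
zeros of `α`.

The vectors `α` with given multiplicities of values are counted together with an ordering of their
nonzero values.
-/

open Finset

section Recursion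

variable {q : ℕ}

theorem dvd_sub_one_pow_sub_neg_one_pow (q s : ℕ) :
    (q : ℤ) ∣ ((q : ℤ) - 1) ^ s - (-1) ^ s := by
  simpa using sub_dvd_pow_sub_pow ((q : ℤ) - 1) (-1) s

theorem mul_psi (q s : ℕ) :
    (q : ℤ) * psi q s = ((q : ℤ) - 1) ^ s + (-1) ^ s * ((q : ℤ) - 1) := by
  refine Int.mul_ediv_cancel' ?_
  have hsplit : ((q : ℤ) - 1) ^ s + (-1) ^ s * ((q : ℤ) - 1)
      = (((q : ℤ) - 1) ^ s - (-1) ^ s) + (q : ℤ) * (-1) ^ s := by ring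
  exact hsplit ▸ dvd_add (dvd_sub_one_pow_sub_neg_one_pow q s) (dvd_mul_right _ _)

theorem mul_phi (hq : 1 < q) (s : ℕ) :
    (q : ℤ) * phi q s = ((q : ℤ) - 1) ^ s - (-1) ^ s := by
  have hq0 : (q : ℤ) ≠ 0 := by positivity
  have hq1 : (q : ℤ) - 1 ≠ 0 := by lia
  obtain ⟨c, hc⟩ := dvd_sub_one_pow_sub_neg_one_pow q s
  have hmul : ((q : ℤ) - 1) ^ s - psi q s = ((q : ℤ) - 1) * c := by
    apply mul_left_cancel₀ hq0
    linear_combination ((q : ℤ) - 1) * hc - mul_psi q s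
  rw [hc, phi, hmul, Int.mul_ediv_cancel_left _ hq1]

theorem psi_zero (hq : q ≠ 0) : psi q 0 = 1 := by
  have hq0 : (q : ℤ) ≠ 0 := mod_cast hq
  apply mul_left_cancel₀ hq0
  linear_combination mul_psi q 0

theorem phi_zero (hq : q ≠ 0) : phi q 0 = 0 := by
  simp [phi, psi_zero hq]

theorem psi_succ_add_psi (hq : q ≠ 0) (s : ℕ) :
    psi q (s + 1) + psi q s = ((q : ℤ) - 1) ^ s := by
  have hq0 : (q : ℤ) ≠ 0 := mod_cast hq
  apply mul_left_cancel₀ hq0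
  linear_combination mul_psi q (s + 1) + mul_psi q s

theorem phi_succ_add_phi (hq : 1 < q) (s : ℕ) :
    phi q (s + 1) + phi q s = ((q : ℤ) - 1) ^ s := by
  have hq0 : (q : ℤ) ≠ 0 := by positivity
  apply mul_left_cancel₀ hq0
  linear_combination mul_phi hq (s + 1) + mul_phi hq s

theorem psi_sub_phi (hq : 1 < q) (s : ℕ) : psi q s - phi q s = (-1) ^ s := by
  have hq0 : (q : ℤ) ≠ 0 := by positivity
  apply mul_left_cancel₀ hq0
  linear_combination mul_psi q s - mul_phi hq s

theorem Arev_cons (q r : ℕ) {L : List ℕ} (hL : L ≠ []) :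
    Arev q (r :: L) = psi q L.sum * phi q r + (-1) ^ r * Arev q L := by
  cases L with
  | nil => exact absurd rfl hL
  | cons => rfl

end Recursion

theorem card_filter_eq_sum_of_equiv_prod {A B C : Type*} [Fintype A] [Fintype B] [Fintype C]
    (e : C ≃ A × B) (p : A → B → Prop) [∀ a b, Decidable (p a b)] :
    #{c | p (e c).1 (e c).2} = ∑ a, #{b | p a b} := by
  simp only [card_filter]
  rw [e.sum_comp fun x => if p x.1 x.2 then 1 else 0, Fintype.sum_prod_type]

theorem sum_eq_zero_and_sum_mul_eq_zero_iff {R J : Type*} [CommRing R] [Fintype J] (a u : J → R)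
    (x : R) : (∑ i, u i = 0 ∧ ∑ i, a i * u i = 0) ↔ ∑ i, (a i - x) * u i = 0 ∧ ∑ i, u i = 0 := by
  simp only [sub_mul, sum_sub_distrib, ← mul_sum]
  grind

section Torus

variable {F : Type*} [Field F] [Fintype F] [DecidableEq F]

theorem card_units_coe_eq (c : F) : #{x : Fˣ | (x : F) = c} = if c = 0 then 0 else 1 := by
  split_ifs with hc
  · simp [hc]
  · exact card_eq_one.mpr ⟨Units.mk0 c hc, by ext x; simp [Units.ext_iff]⟩

-- The last coordinate is determined by the others, whose sum must differ from `c`.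
theorem card_units_sum_eq_succ_add (s : ℕ) (c : F) :
    #{u : Fin (s + 1) → Fˣ | ∑ i, (u i : F) = c} + #{u : Fin s → Fˣ | ∑ i, (u i : F) = c}
      = (Fintype.card F - 1) ^ s := by
  have hsucc : #{u : Fin (s + 1) → Fˣ | ∑ i, (u i : F) = c}
      = #{u : Fin s → Fˣ | ¬ ∑ i, (u i : F) = c} := by
    have hfiber (v : Fin s → Fˣ) :
        #{x : Fˣ | (x : F) = c - ∑ i, (v i : F)} = if ¬ ∑ i, (v i : F) = c then 1 else 0 := by
      simp only [card_units_coe_eq, ite_not, sub_eq_zero, eq_comm (a := c)]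
    rw [card_filter fun v : Fin s → Fˣ => ¬ ∑ i, (v i : F) = c, ← sum_congr rfl fun v _ => hfiber v,
      ← card_filter_eq_sum_of_equiv_prod
        ((Fin.snocEquiv fun _ => Fˣ).symm.trans (Equiv.prodComm _ _))]
    congr! 2 with u
    rw [Fin.sum_univ_castSucc, eq_sub_iff_add_eq']
    rfl
  rw [hsucc, add_comm, card_filter_add_card_filter_not, card_univ, Fintype.card_fun,
    Fintype.card_units, Fintype.card_fin]

theorem card_units_sum_eq_fin (s : ℕ) (c : F) :
    (#{u : Fin s → Fˣ | ∑ i, (u i : F) = c} : ℤ)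
      = if c = 0 then psi (Fintype.card F) s else phi (Fintype.card F) s := by
  have hq := Fintype.one_lt_card (α := F)
  induction s with
  | zero =>
    rw [psi_zero hq.ne_bot, phi_zero hq.ne_bot]
    split_ifs <;> simp [*, eq_comm]
  | succ s ih =>
    have hrec := card_units_sum_eq_succ_add s c
    zify [hq.le] at hrec
    split_ifs at ih ⊢
    · linear_combination hrec - ih - psi_succ_add_psi hq.ne_bot s
    · linear_combination hrec - ih - phi_succ_add_phi hq s

variable {J : Type*} [Fintype J] [DecidableEq J]

theorem card_units_sum_eq (c : F) :
    (#{u : J → Fˣ | ∑ i, (u i : F) = c} : ℤ) = if c = 0 then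
      psi (Fintype.card F) (Fintype.card J) else phi (Fintype.card F) (Fintype.card J) := by
  rw [← card_units_sum_eq_fin]
  let e := Fintype.equivFin J
  exact_mod_cast card_equiv (e.arrowCongr (Equiv.refl Fˣ)) fun u => by
    simp [e.symm.sum_comp fun i => (u i : F)]

theorem card_units_sum_mul_eq {a : J → F} (ha : ∀ i, a i ≠ 0) (c : F) :
    (#{u : J → Fˣ | ∑ i, a i * u i = c} : ℤ) = if c = 0 then
      psi (Fintype.card F) (Fintype.card J) else phi (Fintype.card F) (Fintype.card J) := by
  rw [← card_units_sum_eq]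
  exact_mod_cast card_equiv (Equiv.mulLeft fun i => Units.mk0 (a i) (ha i)) fun u => by simp

theorem card_units_sum_mul_eq_zero (a : J → F) :
    (#{u : J → Fˣ | ∑ i, a i * u i = 0} : ℤ)
      = ((Fintype.card F : ℤ) - 1) ^ #{i | a i = 0} * psi (Fintype.card F) #{i | a i ≠ 0} := by
  have hcount : #{u : J → Fˣ | ∑ i, a i * u i = 0}
      = ∑ _v : {i // a i = 0} → Fˣ,
        #{w : {i // a i ≠ 0} → Fˣ | ∑ i : {i // a i ≠ 0}, a i * (w i : F) = 0} := by
    rw [← card_filter_eq_sum_of_equiv_prod (Equiv.piEquivPiSubtypeProd (a · = 0) fun _ => Fˣ)]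
    congr! 3 with u
    rw [← Fintype.sum_subtype_add_sum_subtype (a · = 0), Fintype.sum_eq_zero, zero_add]
    · rfl
    · exact fun i => by rw [i.2, zero_mul]
  have hq := Fintype.card_pos (α := F)
  rw [hcount, sum_const, card_univ, Fintype.card_fun, Fintype.card_units, Fintype.card_subtype,
    smul_eq_mul]
  push_cast [Nat.cast_sub hq]
  rw [card_units_sum_mul_eq fun i => i.2, if_pos rfl, Fintype.card_subtype]

-- Subtracting `x` times the first equation from the second leaves only the coordinates outside the
-- fiber of `x`; those inside the fiber then have a prescribed sum.
theorem card_units_sum_eq_zero_and_sum_mul_eq_zero_eq_sum (a : J → F) (x : F) :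
    #{u : J → Fˣ | ∑ i, (u i : F) = 0 ∧ ∑ i, a i * u i = 0}
      = ∑ w : {i // a i ≠ x} → Fˣ with ∑ i : {i // a i ≠ x}, (a i - x) * (w i : F) = 0,
        #{v : {i // a i = x} → Fˣ | ∑ i, (v i : F) = -∑ i, (w i : F)} := by
  trans ∑ w : {i // a i ≠ x} → Fˣ, #{v : {i // a i = x} → Fˣ |
      ∑ i : {i // a i ≠ x}, (a i - x) * (w i : F) = 0 ∧ ∑ i, (v i : F) = -∑ i, (w i : F)}
  · rw [← card_filter_eq_sum_of_equiv_prod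
      ((Equiv.piEquivPiSubtypeProd (a · = x) fun _ => Fˣ).trans (Equiv.prodComm _ _))]
    congr! 2 with u
    rw [sum_eq_zero_and_sum_mul_eq_zero_iff a (fun i => (u i : F)) x]
    congr! 1
    · rw [← Fintype.sum_subtype_add_sum_subtype (a · = x), Fintype.sum_eq_zero, zero_add]
      · rfl
      · exact fun i => by rw [i.2, sub_self, zero_mul]
    · rw [← Fintype.sum_subtype_add_sum_subtype (a · = x), eq_neg_iff_add_eq_zero]
      rfl
  · rw [sum_filter]
    exact sum_congr rfl fun w _ => by split_ifs with hw <;> simp [hw]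

theorem card_units_sum_eq_zero_and_sum_mul_eq_zero (a : J → F) (x : F) :
    (#{u : J → Fˣ | ∑ i, (u i : F) = 0 ∧ ∑ i, a i * u i = 0} : ℤ)
      = psi (Fintype.card F) #{i | a i ≠ x} * phi (Fintype.card F) #{i | a i = x}
        + (-1) ^ #{i | a i = x} * #{w : {i // a i ≠ x} → Fˣ |
          ∑ i, (w i : F) = 0 ∧ ∑ i : {i // a i ≠ x}, a i * (w i : F) = 0} := by
  have hfiber (w : {i // a i ≠ x} → Fˣ) :
      (#{v : {i // a i = x} → Fˣ | ∑ i, (v i : F) = -∑ i, (w i : F)} : ℤ)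
        = phi (Fintype.card F) #{i | a i = x}
          + (-1) ^ #{i | a i = x} * if ∑ i, (w i : F) = 0 then 1 else 0 := by
    rw [card_units_sum_eq, Fintype.card_subtype, ← psi_sub_phi (Fintype.one_lt_card (α := F))]
    simp only [neg_eq_zero]
    split_ifs <;> ring
  have hbase : (#{w : {i // a i ≠ x} → Fˣ |
      ∑ i : {i // a i ≠ x}, (a i - x) * (w i : F) = 0} : ℤ)
        = psi (Fintype.card F) #{i | a i ≠ x} := by
    rw [card_units_sum_mul_eq fun i => sub_ne_zero.mpr i.2, if_pos rfl, Fintype.card_subtype]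
  rw [card_units_sum_eq_zero_and_sum_mul_eq_zero_eq_sum a x]
  push_cast [hfiber]
  rw [sum_add_distrib, sum_const, nsmul_eq_mul, hbase, ← mul_sum, sum_boole, filter_filter]
  simp only [← sum_eq_zero_and_sum_mul_eq_zero_iff]

theorem card_units_sum_eq_zero_and_sum_mul_eq_zero_eq_Arev {L : List F} (hL : L ≠ [])
    (hnodup : L.Nodup) {a : J → F} (ha : ∀ i, a i ∈ L) :
    (#{u : J → Fˣ | ∑ i, (u i : F) = 0 ∧ ∑ i, a i * u i = 0} : ℤ)
      = Arev (Fintype.card F) (L.map fun x => #{i | a i = x}) := by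
  have hq := Fintype.one_lt_card (α := F)
  induction L generalizing J with
  | nil => exact absurd rfl hL
  | cons x L ih =>
    obtain ⟨hx, hnodup⟩ := List.nodup_cons.mp hnodup
    have hmem (i : {i // a i ≠ x}) : a i ∈ L := (List.mem_cons.mp (ha i)).resolve_left i.2
    have hfiber (y : F) (hy : y ∈ L) : #{i : {i // a i ≠ x} | a i = y} = #{i | a i = y} := by
      have hyx : y ≠ x := by rintro rfl; exact hx hy
      rw [← card_map (Function.Embedding.subtype _)]
      congr 1
      ext i
      simp only [mem_map, mem_filter, mem_univ, true_and, Function.Embedding.subtype_apply,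
        Subtype.exists, exists_and_right, exists_eq_right]
      grind
    rw [card_units_sum_eq_zero_and_sum_mul_eq_zero a x, List.map_cons]
    rcases eq_or_ne L [] with rfl | hL
    · have hempty : IsEmpty {i // a i ≠ x} := ⟨fun i => List.not_mem_nil (hmem i)⟩
      have hcard : #{i | a i ≠ x} = 0 := by rw [← Fintype.card_subtype, Fintype.card_of_isEmpty]
      simp [hcard, psi_zero hq.ne_bot, ← psi_sub_phi hq, Arev]
    · have hsum : #{i | a i ≠ x} = (L.map fun y => #{i : {i // a i ≠ x} | a i = y}).sum := by
        rw [← List.sum_toFinset _ hnodup, ← Fintype.card_subtype, ← card_univ]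
        exact card_eq_sum_card_fiberwise fun i _ => List.mem_toFinset.mpr (hmem i)
      rw [ih hL hnodup hmem, Arev_cons _ _ (by simpa using hL), hsum, List.map_congr_left hfiber]

theorem card_units_sum_eq_zero_and_sum_mul_eq_zero_eq_Atup {l : ℕ} {γ : Fin l → F} (hl : l ≠ 0)
    (hγ : Function.Injective γ) {a : J → F} (ha : ∀ i, ∃ m, γ m = a i) :
    (#{u : J → Fˣ | ∑ i, (u i : F) = 0 ∧ ∑ i, a i * u i = 0} : ℤ)
      = Atup (Fintype.card F) (List.ofFn fun m => #{i | a i = γ m}) := by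
  have hmap : List.ofFn (fun m => #{i | a i = γ m})
      = (List.ofFn γ).map fun x => #{i | a i = x} := by rw [List.map_ofFn]; rfl
  rw [Atup, hmap, ← List.map_reverse]
  exact card_units_sum_eq_zero_and_sum_mul_eq_zero_eq_Arev (by simpa using hl)
    (List.nodup_reverse.mpr (List.nodup_ofFn.mpr hγ)) fun i => by
      simpa [List.mem_ofFn] using ha i

end Torus

section ZeroSet

variable {F : Type*} [Field F] [Fintype F] [DecidableEq F] {J : Type*} [Fintype J] [DecidableEq J]

theorem card_sum_mul_eq (b : J → F) {i : J} (hi : b i ≠ 0) (c : F) :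
    #{z : J → F | ∑ j, b j * z j = c} = Fintype.card F ^ (Fintype.card J - 1) := by
  have hfiber (w : {j // j ≠ i} → F) :
      #{x | b i * x = c - ∑ j : {j // j ≠ i}, b j * w j} = 1 :=
    card_eq_one.mpr ⟨(c - ∑ j : {j // j ≠ i}, b j * w j) / b i, by
      ext x; simp [eq_div_iff hi, mul_comm]⟩
  calc #{z : J → F | ∑ j, b j * z j = c}
      = ∑ w : {j // j ≠ i} → F, #{x | b i * x = c - ∑ j : {j // j ≠ i}, b j * w j} := by
        rw [← card_filter_eq_sum_of_equiv_prod
          ((Equiv.funSplitAt i F).trans (Equiv.prodComm _ _))]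
        congr! 2 with z
        rw [Fintype.sum_eq_add_sum_subtype_ne _ i, eq_sub_iff_add_eq]
        rfl
    _ = Fintype.card F ^ (Fintype.card J - 1) := by
        simp only [hfiber, sum_const, smul_eq_mul, mul_one, card_univ, Fintype.card_fun]
        rw [Fintype.card_subtype_compl, Fintype.card_subtype_eq]

theorem card_units_filter_eq (p : (J → F) → Prop) [DecidablePred p] :
    #{u : J → Fˣ | p fun i => u i} = #{y : J → F | (∀ i, y i ≠ 0) ∧ p y} := by
  refine card_bij (fun u _ i => (u i : F)) (fun u hu => ?_) (fun u _ v _ huv => ?_) fun y hy => ?_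
  · simpa using hu
  · exact funext fun i => Units.ext (congrFun huv i)
  · obtain ⟨hne, hp⟩ := (mem_filter.mp hy).2
    exact ⟨fun i => Units.mk0 (y i) (hne i), by simpa using hp, rfl⟩

theorem card_sum_mul_prod_eq_zero_and (p : (J → F) → Prop) [DecidablePred p] :
    (#{y : J → F | (∑ i, y i) * ∏ i, y i = 0 ∧ p y} : ℤ)
      = #{y | p y} - #{u : J → Fˣ | p fun i => u i}
        + #{u : J → Fˣ | ∑ i, (u i : F) = 0 ∧ p fun i => u i} := by
  have hcompl : #{y : J → F | p y ∧ ¬ (∑ i, y i) * ∏ i, y i = 0}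
      = #{u : J → Fˣ | (p fun i => u i) ∧ ¬ ∑ i, (u i : F) = 0} := by
    rw [card_units_filter_eq fun y => p y ∧ ¬ ∑ i, y i = 0]
    congr! 2 with y
    simp only [mul_eq_zero, prod_eq_zero_iff, mem_univ, true_and]
    grind
  have hsplit := card_filter_add_card_filter_not (s := {y : J → F | p y})
    fun y => (∑ i, y i) * ∏ i, y i = 0
  have hsplit_units := card_filter_add_card_filter_not (s := {u : J → Fˣ | p fun i => u i})
    fun u => ∑ i, (u i : F) = 0
  simp only [filter_filter, hcompl] at hsplit hsplit_units
  simp only [and_comm (b := p _)]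
  lia

theorem card_sum_mul_prod_eq_zero :
    (#{y : J → F | (∑ i, y i) * ∏ i, y i = 0} : ℤ)
      = (Fintype.card F : ℤ) ^ Fintype.card J + psi (Fintype.card F) (Fintype.card J)
        - ((Fintype.card F : ℤ) - 1) ^ Fintype.card J := by
  have h := card_sum_mul_prod_eq_zero_and (F := F) (J := J) fun _ => True
  simp only [and_true, filter_true, card_univ, Fintype.card_fun, Fintype.card_units,
    card_units_sum_eq, if_true] at h
  push_cast [Nat.cast_sub (Fintype.card_pos (α := F))] at h
  linear_combination h

theorem card_sum_mul_prod_eq_zero_and_sum_mul_eq_zero {a : J → F} {i : J} (hi : a i ≠ 0) {l : ℕ}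
    {γ : Fin l → F} (hγ : Function.Injective γ) (ha : ∀ i, ∃ m, γ m = a i) :
    (#{y : J → F | (∑ i, y i) * ∏ i, y i = 0 ∧ ∑ i, a i * y i = 0} : ℤ)
      = (Fintype.card F : ℤ) ^ (Fintype.card J - 1)
        - ((Fintype.card F : ℤ) - 1) ^ #{i | a i = 0} * psi (Fintype.card F) #{i | a i ≠ 0}
        + Atup (Fintype.card F) (List.ofFn fun m => #{i | a i = γ m}) := by
  have hl : l ≠ 0 := by
    rintro rfl
    exact (ha i).choose.elim0
  rw [card_sum_mul_prod_eq_zero_and fun y => ∑ i, a i * y i = 0, card_sum_mul_eq a hi,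
    card_units_sum_mul_eq_zero, card_units_sum_eq_zero_and_sum_mul_eq_zero_eq_Atup hl hγ ha]
  push_cast
  rfl

end ZeroSet

section Fibers

variable {J K : Type*} [Fintype J] [DecidableEq K]

theorem exists_perm_comp_eq {f g : J → K} (h : ∀ x, #{i | f i = x} = #{i | g i = x}) :
    ∃ σ : Equiv.Perm J, f ∘ σ = g := by
  have e (x : K) : {i // g i = x} ≃ {i // f i = x} :=
    Fintype.equivOfCardEq (by rw [Fintype.card_subtype, Fintype.card_subtype, h])
  refine ⟨(Equiv.sigmaFiberEquiv g).symm.trans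
    ((Equiv.sigmaCongrRight e).trans (Equiv.sigmaFiberEquiv f)), funext fun i => ?_⟩
  exact (e (g i) ⟨i, rfl⟩).2

theorem exists_forall_card_fiber_eq [Fintype K] {c : K → ℕ} (hc : ∑ x, c x = Fintype.card J) :
    ∃ f : J → K, ∀ x, #{i | f i = x} = c x := by
  have e : J ≃ Σ x, Fin (c x) := Fintype.equivOfCardEq (by simp [hc])
  refine ⟨fun i => (e i).1, fun x => ?_⟩
  rw [← Fintype.card_subtype, Fintype.card_congr
    ((e.subtypeEquiv fun _ => Iff.rfl).trans (Equiv.sigmaSubtype (β := fun x => Fin (c x)) x)),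
    Fintype.card_fin]

variable [DecidableEq J]

theorem card_perm_comp_eq_self [Fintype K] (f : J → K) :
    #{σ : Equiv.Perm J | f ∘ σ = f} = ∏ x, (#{i | f i = x}).factorial := by
  have hstab := DomMulAct.stabilizer_card f
  simp only [Fintype.card_subtype] at hstab
  exact hstab

theorem card_forall_card_fiber_eq_mul [Fintype K] {c : K → ℕ}
    (hc : ∑ x, c x = Fintype.card J) :
    #{f : J → K | ∀ x, #{i | f i = x} = c x} * ∏ x, (c x).factorial
      = (Fintype.card J).factorial := by
  obtain ⟨f₀, hf₀⟩ := exists_forall_card_fiber_eq hc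
  have hfiber (f : J → K) (hf : ∀ x, #{i | f i = x} = c x) :
      #{σ : Equiv.Perm J | f₀ ∘ σ = f} = ∏ x, (c x).factorial := by
    obtain ⟨τ, rfl⟩ := exists_perm_comp_eq fun x => (hf₀ x).trans (hf x).symm
    simp only [← hf₀]
    rw [← card_perm_comp_eq_self f₀]
    refine card_equiv (Equiv.mulRight τ⁻¹) fun σ => ?_
    simp only [mem_filter, mem_univ, true_and, Equiv.coe_mulRight, Equiv.Perm.coe_mul,
      ← Function.comp_assoc, Equiv.Perm.coe_inv, Equiv.comp_symm_eq]
  have hmaps (σ : Equiv.Perm J) (x : K) : #{i | (f₀ ∘ σ) i = x} = c x := by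
    rw [← hf₀ x]
    exact card_equiv σ (by simp)
  have htotal := card_eq_sum_card_fiberwise (s := (univ : Finset (Equiv.Perm J)))
    (f := fun σ : Equiv.Perm J => f₀ ∘ σ) (t := {f : J → K | ∀ x, #{i | f i = x} = c x})
    fun σ _ => mem_filter.mpr ⟨mem_univ _, hmaps σ⟩
  rw [card_univ, Fintype.card_perm, sum_congr rfl fun f hf => hfiber f (mem_filter.mp hf).2,
    sum_const, smul_eq_mul] at htotal
  exact htotal.symm

theorem card_mem_range_and_card_fiber_eq [Fintype K] {X : Type*} [Fintype X] [DecidableEq X]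
    {γ : K → X} (hγ : Function.Injective γ) (c : K → ℕ) :
    #{a : J → X | (∀ i, ∃ m, γ m = a i) ∧ ∀ m, #{i | a i = γ m} = c m}
      = #{f : J → K | ∀ m, #{i | f i = m} = c m} := by
  symm
  refine card_bij (fun f _ i => γ (f i)) (fun f hf => ?_) (fun f _ g _ hfg => ?_) fun a ha => ?_
  · simpa [hγ.eq_iff] using hf
  · exact funext fun i => hγ (congrFun hfg i)
  · obtain ⟨hrange, hcard⟩ := (mem_filter.mp ha).2
    choose f hf using hrange
    obtain rfl : (fun i => γ (f i)) = a := funext hf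
    exact ⟨f, by simpa [hγ.eq_iff] using hcard, rfl⟩

end Fibers

section Profiles

variable {F : Type*} [Zero F] [DecidableEq F] {J : Type*} [Fintype J] {l : ℕ}

/-- The value profile of a vector `a`: its nonzero coordinates take exactly the distinct values
`β m`, the value `β m` being taken `r m` times, and its other `t` coordinates vanish. -/
structure HasProfile (t : ℕ) (r : Fin l → ℕ) (β : Fin l → F) (a : J → F) : Prop where
  injective : Function.Injective β
  ne_zero : ∀ m, β m ≠ 0
  exists_eq : ∀ i, a i ≠ 0 → ∃ m, a i = β m
  card_zero : #{i | a i = 0} = t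
  card_eq : ∀ m, #{i | a i = β m} = r m

theorem hasProfile_iff_snoc {t : ℕ} {r : Fin l → ℕ} {β : Fin l → F} {a : J → F} :
    HasProfile t r β a ↔ Function.Injective (Fin.snoc β 0 : Fin (l + 1) → F) ∧
      (∀ i, ∃ m, (Fin.snoc β 0 : Fin (l + 1) → F) m = a i) ∧
      ∀ m, #{i | a i = (Fin.snoc β 0 : Fin (l + 1) → F) m}
        = (Fin.snoc r t : Fin (l + 1) → ℕ) m := by
  simp only [Fin.snoc_injective_iff, Set.mem_range, not_exists, Fin.exists_fin_succ',
    Fin.forall_fin_succ', Fin.snoc_castSucc, Fin.snoc_last]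
  constructor
  · rintro ⟨hinj, hne, hex, hzero, hcard⟩
    exact ⟨⟨hinj, hne⟩, fun i => by grind, hcard, hzero⟩
  · rintro ⟨⟨hinj, hne⟩, hex, hcard, hzero⟩
    exact ⟨hinj, hne, fun i hi => by grind, hzero, hcard⟩

open scoped Classical in
theorem card_hasProfile_mul [Fintype F] [DecidableEq J] {t : ℕ} {r : Fin l → ℕ}
    (hsum : t + ∑ m, r m = Fintype.card J) {β : Fin l → F} (hβ : Function.Injective β)
    (hne : ∀ m, β m ≠ 0) :
    #{a : J → F | HasProfile t r β a} * (t.factorial * ∏ m, (r m).factorial)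
      = (Fintype.card J).factorial := by
  have hinj : Function.Injective (Fin.snoc β 0 : Fin (l + 1) → F) :=
    Fin.snoc_injective_iff.mpr ⟨hβ, by simpa using hne⟩
  have hcount := card_forall_card_fiber_eq_mul (J := J) (c := (Fin.snoc r t : Fin (l + 1) → ℕ))
    (by simp only [Fin.sum_univ_castSucc, Fin.snoc_castSucc, Fin.snoc_last, ← hsum, add_comm])
  rw [← card_mem_range_and_card_fiber_eq hinj, Fin.prod_univ_castSucc] at hcount
  simp only [Fin.snoc_castSucc, Fin.snoc_last] at hcount
  simp only [hasProfile_iff_snoc, hinj, true_and]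
  rw [mul_comm t.factorial]
  convert hcount

theorem HasProfile.comp_perm {t : ℕ} {r : Fin l → ℕ} {β : Fin l → F} {a : J → F}
    (ha : HasProfile t r β a) (σ : Equiv.Perm (Fin l)) : HasProfile t (r ∘ σ) (β ∘ σ) a where
  injective := ha.injective.comp σ.injective
  ne_zero m := ha.ne_zero (σ m)
  exists_eq i hi := by
    obtain ⟨m, hm⟩ := ha.exists_eq i hi
    exact ⟨σ.symm m, by simpa using hm⟩
  card_zero := ha.card_zero
  card_eq m := ha.card_eq (σ m)

theorem HasProfile.exists_perm {t : ℕ} {r : Fin l → ℕ} (hr : ∀ m, 1 ≤ r m) {β γ : Fin l → F}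
    {a : J → F} (hβ : HasProfile t r β a) (hγ : HasProfile t r γ a) :
    ∃ σ : Equiv.Perm (Fin l), r ∘ σ = r ∧ β ∘ σ = γ := by
  have hrange (m : Fin l) : ∃ m', γ m = β m' := by
    obtain ⟨i, hi⟩ := card_pos.mp ((hr m).trans_eq (hγ.card_eq m).symm)
    rw [← (mem_filter.mp hi).2]
    exact hβ.exists_eq i ((mem_filter.mp hi).2.trans_ne (hγ.ne_zero m))
  choose τ hτ using hrange
  have hinj : Function.Injective τ := fun m m' h => hγ.injective (by rw [hτ, hτ, h])
  refine ⟨Equiv.ofBijective τ (Finite.injective_iff_bijective.mp hinj), ?_, ?_⟩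
  · ext m
    rw [← hγ.card_eq m, hτ m, hβ.card_eq]
    rfl
  · exact funext fun m => (hτ m).symm

open scoped Classical in
theorem HasProfile.card_eq_card_perm [Fintype F] {t : ℕ} {r : Fin l → ℕ} (hr : ∀ m, 1 ≤ r m)
    {β : Fin l → F} {a : J → F} (ha : HasProfile t r β a) :
    #{γ : Fin l → F | HasProfile t r γ a} = #{σ : Equiv.Perm (Fin l) | r ∘ σ = r} := by
  symm
  refine card_bij (fun σ _ => β ∘ σ) (fun σ hσ => ?_) (fun σ _ τ _ h => ?_) fun γ hγ => ?_
  · have hcomp := ha.comp_perm σ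
    rw [(mem_filter.mp hσ).2] at hcomp
    exact mem_filter.mpr ⟨mem_univ _, hcomp⟩
  · exact Equiv.ext fun m => ha.injective (congrFun h m)
  · obtain ⟨σ, hσ, rfl⟩ := ha.exists_perm hr (mem_filter.mp hγ).2
    exact ⟨σ, by simpa using hσ, rfl⟩

end Profiles

section CountProfiles

variable {l j : ℕ}

/-- The type of `(r_1, …, r_l)`: the distinct values `v t` occurring among the entries have
multiplicities `ι t`. -/
def IsOfType (r : Fin l → ℕ) (ι : Fin j → ℕ) : Prop :=
  ∃ v : Fin j → ℕ, Function.Injective v ∧ (∀ m : Fin l, ∃ t, r m = v t) ∧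
    ∀ t, ι t = Nat.card {m : Fin l // r m = v t}

theorem IsOfType.exists_index {r : Fin l → ℕ} {ι : Fin j → ℕ} (h : IsOfType r ι) :
    ∃ c : Fin l → Fin j, (∀ m m', r m = r m' ↔ c m = c m') ∧ ∀ t, #{m | c m = t} = ι t := by
  obtain ⟨v, hv, hrv, hι⟩ := h
  choose c hc using hrv
  refine ⟨c, fun m m' => by rw [hc, hc, hv.eq_iff], fun t => ?_⟩
  simp only [hι, hc, hv.eq_iff, Nat.card_eq_fintype_card, Fintype.card_subtype]

theorem IsOfType.prod_factorial_dvd {r : Fin l → ℕ} {ι : Fin j → ℕ} (h : IsOfType r ι) :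
    ∏ t, (ι t).factorial ∣ l.factorial := by
  obtain ⟨c, -, hι⟩ := h.exists_index
  have hsum : ∑ t, ι t = l := by
    simp only [← hι]
    rw [← card_eq_sum_card_fiberwise fun _ _ => by simp, card_univ, Fintype.card_fin]
  conv_rhs => rw [← hsum]
  exact Nat.prod_factorial_dvd_factorial_sum _ _

theorem IsOfType.card_perm {r : Fin l → ℕ} {ι : Fin j → ℕ} (h : IsOfType r ι) :
    #{σ : Equiv.Perm (Fin l) | r ∘ σ = r} = ∏ t, (ι t).factorial := by
  obtain ⟨c, hc, hι⟩ := h.exists_index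
  simp only [← hι]
  rw [← card_perm_comp_eq_self c]
  congr! 2 with σ
  simp only [funext_iff, Function.comp_apply, hc]

variable {F : Type*} [Zero F] [Fintype F] [DecidableEq F]

theorem card_injective_and_ne_zero (l : ℕ) :
    #{β : Fin l → F | Function.Injective β ∧ ∀ m, β m ≠ 0}
      = (Fintype.card F - 1).descFactorial l := by
  have hcard := Fintype.card_embedding_eq (α := Fin l) (β := {x : F // x ≠ 0})
  rw [Fintype.card_fin, Fintype.card_subtype_compl, Fintype.card_subtype_eq] at hcard
  rw [← hcard, ← card_univ]
  symm
  refine card_bij (fun e _ m => (e m : F)) (fun e _ => ?_) (fun e _ e' _ h => ?_) fun β hβ => ?_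
  · exact mem_filter.mpr ⟨mem_univ _, Subtype.val_injective.comp e.injective, fun m => (e m).2⟩
  · exact DFunLike.ext _ _ fun m => Subtype.ext (congrFun h m)
  · obtain ⟨hinj, hne⟩ := (mem_filter.mp hβ).2
    exact ⟨⟨fun m => ⟨β m, hne m⟩, fun m m' h => hinj (congrArg Subtype.val h)⟩, mem_univ _, rfl⟩

variable {J : Type*} [Fintype J] {r : Fin l → ℕ} {ι : Fin j → ℕ}

-- Double counting of the pairs `(a, β)` such that `a` has profile `β`: each `β` belongs to
-- `(#J)! / (t! ∏ r_m!)` vectors, and each vector admits `∏ ι_t!` orderings `β` of its values.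
open scoped Classical in
theorem card_exists_hasProfile_mul [DecidableEq J] {t : ℕ} (hr : ∀ m, 1 ≤ r m)
    (hsum : t + ∑ m, r m = Fintype.card J) (hι : IsOfType r ι) :
    #{a : J → F | ∃ β, HasProfile t r β a} * (∏ t, (ι t).factorial)
        * (t.factorial * ∏ m, (r m).factorial)
      = (Fintype.card F - 1).descFactorial l * (Fintype.card J).factorial := by
  have hvectors (a : J → F) (ha : ∃ β, HasProfile t r β a) :
      #{β | HasProfile t r β a} = ∏ t, (ι t).factorial := by
    obtain ⟨β, hβ⟩ := ha
    rw [hβ.card_eq_card_perm hr, ← hι.card_perm]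
  have hpairs : ∑ a : J → F with ∃ β, HasProfile t r β a, #{β | HasProfile t r β a}
      = ∑ β : Fin l → F with Function.Injective β ∧ ∀ m, β m ≠ 0,
        #{a : J → F | HasProfile t r β a} := by
    rw [sum_filter_of_ne fun a _ ha => ?_, sum_filter_of_ne fun β _ hβ => ?_]
    · simp only [card_filter]
      exact sum_comm
    · obtain ⟨a, ha⟩ := card_ne_zero.mp hβ
      exact ⟨(mem_filter.mp ha).2.injective, (mem_filter.mp ha).2.ne_zero⟩
    · obtain ⟨β, hβ⟩ := card_ne_zero.mp ha
      exact ⟨β, (mem_filter.mp hβ).2⟩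
  rw [sum_congr rfl fun a ha => hvectors a (mem_filter.mp ha).2, sum_const, smul_eq_mul] at hpairs
  rw [hpairs, sum_mul, ← card_injective_and_ne_zero]
  exact sum_const_nat fun β hβ =>
    card_hasProfile_mul hsum (mem_filter.mp hβ).2.1 (mem_filter.mp hβ).2.2

theorem card_exists_hasProfile (hr : ∀ m, 1 ≤ r m) (hsum : ∑ m, r m ≤ Fintype.card J)
    (hι : IsOfType r ι) :
    Nat.card {a : J → F // ∃ β, HasProfile (Fintype.card J - ∑ m, r m) r β a}
      = (Fintype.card J).choose (∑ m, r m) * ((∑ m, r m).factorial / ∏ m, (r m).factorial)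
        * (l.factorial / ∏ t, (ι t).factorial) * (Fintype.card F - 1).choose l := by
  classical
  obtain ⟨x, hx⟩ := Nat.prod_factorial_dvd_factorial_sum univ r
  obtain ⟨y, hy⟩ := hι.prod_factorial_dvd
  have hrpos : 0 < ∏ m, (r m).factorial := prod_pos fun _ _ => Nat.factorial_pos _
  have hιpos : 0 < ∏ t, (ι t).factorial := prod_pos fun _ _ => Nat.factorial_pos _
  have htpos := Nat.factorial_pos (Fintype.card J - ∑ m, r m)
  have hcount := card_exists_hasProfile_mul (F := F) hr (Nat.sub_add_cancel hsum) hι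
  rw [Nat.descFactorial_eq_factorial_mul_choose, hy,
    ← Nat.choose_mul_factorial_mul_factorial hsum, hx] at hcount
  rw [Nat.card_eq_fintype_card, Fintype.card_subtype, hx, hy, Nat.mul_div_cancel_left _ hrpos,
    Nat.mul_div_cancel_left _ hιpos]
  apply Nat.eq_of_mul_eq_mul_right (Nat.mul_pos hιpos (Nat.mul_pos htpos hrpos))
  linear_combination hcount

end CountProfiles

theorem HasProfile.card_sum_mul_prod_eq_zero_and_sum_mul_eq_zero {F : Type*} [Field F] [Fintype F]
    [DecidableEq F] {J : Type*} [Fintype J] [DecidableEq J] {l s t : ℕ} {r : Fin l → ℕ}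
    {β : Fin l → F} {a : J → F} (ha : HasProfile t r β a) (hst : s + t = Fintype.card J)
    (hs : s ≠ 0) :
    (#{y : J → F | (∑ i, y i) * ∏ i, y i = 0 ∧ ∑ i, a i * y i = 0} : ℤ)
      = (Fintype.card F : ℤ) ^ (Fintype.card J - 1)
        - ((Fintype.card F : ℤ) - 1) ^ t * psi (Fintype.card F) s
        + Atup (Fintype.card F) (List.ofFn r ++ [t]) := by
  obtain ⟨hinj, hrange, hcard⟩ := hasProfile_iff_snoc.mp ha
  have hsplit := card_filter_add_card_filter_not (s := univ) fun i => a i = 0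
  rw [ha.card_zero, card_univ, ← hst, add_comm] at hsplit
  have hsupport : #{i | a i ≠ 0} = s := Nat.add_right_cancel hsplit
  obtain ⟨i, hi⟩ := card_ne_zero.mp (hsupport.trans_ne hs)
  rw [_root_.card_sum_mul_prod_eq_zero_and_sum_mul_eq_zero (mem_filter.mp hi).2 hinj hrange,
    ha.card_zero, hsupport]
  simp only [hcard, List.ofFn_succ', Fin.snoc_castSucc, Fin.snoc_last, List.concat_eq_append]

section Cylinders

variable {F : Type*} [Field F] [Fintype F] [DecidableEq F] {h d : ℕ}

theorem card_head_and_sum_mul_eq_zero (α : Fin (h + d) → F) (p : (Fin h → F) → Prop)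
    [DecidablePred p] :
    #{P : Fin (h + d) → F | (p fun i => P (Fin.castAdd d i)) ∧ ∑ i, α i * P i = 0}
      = ∑ y with p y, #{z : Fin d → F |
        ∑ i, α (Fin.natAdd h i) * z i = -∑ i, α (Fin.castAdd d i) * y i} := by
  trans ∑ y, #{z : Fin d → F |
    p y ∧ ∑ i, α (Fin.natAdd h i) * z i = -∑ i, α (Fin.castAdd d i) * y i}
  · rw [← card_filter_eq_sum_of_equiv_prod (Fin.appendEquiv h d).symm]
    congr! 2 with P
    rw [Fin.sum_univ_add, add_comm, eq_neg_iff_add_eq_zero]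
    rfl
  · rw [sum_filter]
    exact sum_congr rfl fun y _ => by split_ifs with hy <;> simp [hy]

theorem card_head_and_sum_mul_eq_zero_of_tail_ne_zero (α : Fin (h + d) → F) {i : Fin d}
    (hi : α (Fin.natAdd h i) ≠ 0) (p : (Fin h → F) → Prop) [DecidablePred p] :
    #{P : Fin (h + d) → F | (p fun i => P (Fin.castAdd d i)) ∧ ∑ i, α i * P i = 0}
      = Fintype.card F ^ (d - 1) * #{y | p y} := by
  rw [card_head_and_sum_mul_eq_zero, mul_comm]
  simp only [card_sum_mul_eq (fun i => α (Fin.natAdd h i)) hi, sum_const, smul_eq_mul,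
    Fintype.card_fin]

theorem card_head_and_sum_mul_eq_zero_of_tail_eq_zero (α : Fin (h + d) → F)
    (hα : ∀ i, α (Fin.natAdd h i) = 0) (p : (Fin h → F) → Prop) [DecidablePred p] :
    #{P : Fin (h + d) → F | (p fun i => P (Fin.castAdd d i)) ∧ ∑ i, α i * P i = 0}
      = Fintype.card F ^ d * #{y | p y ∧ ∑ i, α (Fin.castAdd d i) * y i = 0} := by
  have hfiber (y : Fin h → F) : #{z : Fin d → F |
      ∑ i, α (Fin.natAdd h i) * z i = -∑ i, α (Fin.castAdd d i) * y i}
        = if ∑ i, α (Fin.castAdd d i) * y i = 0 then Fintype.card F ^ d else 0 := by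
    split_ifs with hy <;> simp [hα, hy, eq_comm (a := (0 : F))]
  rw [card_head_and_sum_mul_eq_zero, mul_comm]
  simp only [hfiber, ← sum_filter, filter_filter, sum_const, smul_eq_mul]

end Cylinders

section Coordinates

variable {F : Type*} [Zero F] {h d : ℕ}

theorem card_subtype_castAdd {p : Fin (h + d) → Prop} (hp : ∀ i, p i → (i : ℕ) < h) :
    Nat.card {i // p i} = Nat.card {i : Fin h // p (Fin.castAdd d i)} :=
  Nat.card_congr
    { toFun := fun i => ⟨⟨i.1, hp i.1 i.2⟩, i.2⟩
      invFun := fun i => ⟨Fin.castAdd d i.1, i.2⟩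
      left_inv := fun _ => rfl
      right_inv := fun _ => rfl }

theorem card_tail_eq_zero_and_head (p : (Fin h → F) → Prop) :
    Nat.card {α : Fin (h + d) → F // (∀ i : Fin (h + d), h ≤ (i : ℕ) → α i = 0) ∧
      p fun i => α (Fin.castAdd d i)} = Nat.card {a : Fin h → F // p a} :=
  Nat.card_congr
    { toFun := fun α => ⟨_, α.2.2⟩
      invFun := fun a => ⟨Fin.append a.1 0, by
        simpa [Fin.forall_fin_add] using a.2⟩
      left_inv := fun α => by
        ext i
        refine Fin.addCases (fun i => by simp) (fun i => ?_) i
        simp [α.2.1 (Fin.natAdd h i) (by simp)]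
      right_inv := fun a => by simp }

/-- The condition of part (ii) of the theorem on a vector `α`: it is supported on the first `h`
coordinates, exactly `t` of which vanish, and its nonzero coordinates take `l` distinct values with
multiplicities `r`. -/
def HasValueType {k l : ℕ} (h t : ℕ) (r : Fin l → ℕ) (α : Fin k → F) : Prop :=
  (∀ i : Fin k, h ≤ (i : ℕ) → α i = 0) ∧
    Nat.card {i : Fin k // (i : ℕ) < h ∧ α i = 0} = t ∧
    ∃ β : Fin l → F, Function.Injective β ∧ (∀ m, β m ≠ 0) ∧
      (∀ i : Fin k, α i ≠ 0 → ∃ m, α i = β m) ∧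
      ∀ m, Nat.card {i : Fin k // α i = β m} = r m

theorem hasValueType_iff [DecidableEq F] {l t : ℕ} {r : Fin l → ℕ} {α : Fin (h + d) → F} :
    HasValueType h t r α ↔ (∀ i : Fin (h + d), h ≤ (i : ℕ) → α i = 0) ∧
      ∃ β, HasProfile t r β fun i => α (Fin.castAdd d i) := by
  refine and_congr_right fun htail => ?_
  have hlt (i : Fin (h + d)) (hi : α i ≠ 0) : (i : ℕ) < h :=
    not_le.mp fun hle => hi (htail i hle)
  have hcard_eq {x : F} (hx : x ≠ 0) : Nat.card {i : Fin (h + d) // α i = x}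
      = #{i | α (Fin.castAdd d i) = x} := by
    rw [card_subtype_castAdd fun i hi => hlt i (hi.trans_ne hx), Nat.card_eq_fintype_card,
      Fintype.card_subtype]
  have hcard_zero : Nat.card {i : Fin (h + d) // (i : ℕ) < h ∧ α i = 0}
      = #{i | α (Fin.castAdd d i) = 0} := by
    rw [card_subtype_castAdd fun i hi => hi.1, Nat.card_eq_fintype_card, Fintype.card_subtype]
    simp only [Fin.val_castAdd, Fin.is_lt, true_and]
  rw [hcard_zero, ← exists_and_left]
  refine exists_congr fun β => ⟨?_, ?_⟩
  · rintro ⟨ht, hinj, hne, hex, hcard⟩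
    exact ⟨hinj, hne, fun i => hex _, ht, fun m => hcard_eq (hne m) ▸ hcard m⟩
  · rintro ⟨hinj, hne, hex, ht, hcard⟩
    exact ⟨ht, hinj, hne, fun i hi => hex ⟨i, hlt i hi⟩ hi,
      fun m => (hcard_eq (hne m)).trans (hcard m)⟩

end Coordinates

section Weights

variable {F : Type*} [Field F]

/-- The Hamming weight `w(α)` of the codeword of `α` in the linear code with defining set `D`. -/
noncomputable def weight {J : Type*} [Fintype J] (D : Set (J → F)) (α : J → F) : ℕ :=
  Nat.card {P : J → F // P ∈ D ∧ ∑ i, α i * P i ≠ 0}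

/-- The defining set `D_1` in `F ^ k`, of which the first `h` coordinates are singled out. -/
def definingSet (F : Type*) [Field F] {h k : ℕ} (hhk : h ≤ k) : Set (Fin k → F) :=
  {x | x ≠ 0 ∧ (∑ i : Fin h, x (Fin.castLE hhk i)) * ∏ i : Fin h, x (Fin.castLE hhk i) = 0}

variable [Fintype F] {h k : ℕ}

-- Removing the origin from the zero set `E` of `p` lowers the number of points of `E` on the
-- hyperplane `⟨α, x⟩ = 0` by one, whence the final `1`.
theorem weight_ne_zero_and [DecidableEq F] {J : Type*} [Fintype J] [DecidableEq J]
    {p : (J → F) → Prop} [DecidablePred p] (hp : p 0) (α : J → F) :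
    (weight {P | P ≠ 0 ∧ p P} α : ℤ)
      = Nat.card {P | P ≠ 0 ∧ p P} - #{P | p P ∧ ∑ i, α i * P i = 0} + 1 := by
  simp only [weight, Set.mem_ofPred_eq, Set.coe_ofPred, Nat.card_eq_fintype_card,
    Fintype.card_subtype]
  have hpoints : #{P | P ≠ 0 ∧ p P} + 1 = #{P | p P} := by
    rw [← card_erase_add_one (mem_filter.mpr ⟨mem_univ 0, hp⟩)]
    congr 2
    ext P
    simp
  have hweight : #{P | (P ≠ 0 ∧ p P) ∧ ∑ i, α i * P i ≠ 0}
      = #{P | p P ∧ ¬ ∑ i, α i * P i = 0} := by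
    congr! 2 with P
    have hzero (h : P = 0) : ∑ i, α i * P i = 0 := by simp [h]
    tauto
  have hsplit := card_filter_add_card_filter_not (s := {P : J → F | p P})
    fun P => ∑ i, α i * P i = 0
  rw [filter_filter, filter_filter] at hsplit
  lia

theorem card_exists_tail_ne_zero (hhk : h ≤ k) :
    Nat.card {α : Fin k → F // ∃ i : Fin k, h ≤ (i : ℕ) ∧ α i ≠ 0}
      = Fintype.card F ^ k - Fintype.card F ^ h := by
  classical
  obtain ⟨d, rfl⟩ := Nat.exists_eq_add_of_le hhk
  have htail : Nat.card {α : Fin (h + d) → F // ∀ i : Fin (h + d), h ≤ (i : ℕ) → α i = 0}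
      = Fintype.card F ^ h := by
    simpa using card_tail_eq_zero_and_head (F := F) (h := h) (d := d) fun _ => True
  rw [Nat.card_eq_fintype_card] at htail ⊢
  have hcompl := Fintype.card_subtype_compl
    fun α : Fin (h + d) → F => ∀ i : Fin (h + d), h ≤ (i : ℕ) → α i = 0
  simpa [htail] using hcompl

theorem weight_definingSet_of_tail_ne_zero (hhk : h ≤ k) {α : Fin k → F}
    (hα : ∃ i : Fin k, h ≤ (i : ℕ) ∧ α i ≠ 0) :
    (weight (definingSet F hhk) α : ℤ) = Nat.card (definingSet F hhk)
      - (Fintype.card F : ℤ) ^ (k - h - 1) * ((Fintype.card F : ℤ) ^ h + psi (Fintype.card F) h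
        - ((Fintype.card F : ℤ) - 1) ^ h) + 1 := by
  classical
  obtain ⟨d, rfl⟩ := Nat.exists_eq_add_of_le hhk
  obtain ⟨i, hi, hαi⟩ := hα
  have htail : α (Fin.natAdd h ⟨i - h, by lia⟩) ≠ 0 := by
    convert hαi
    exact Fin.ext (Nat.add_sub_cancel' hi)
  have hzeros := card_sum_mul_prod_eq_zero (F := F) (J := Fin h)
  rw [Fintype.card_fin] at hzeros
  have hcard := card_head_and_sum_mul_eq_zero_of_tail_ne_zero α htail
    fun y => (∑ i, y i) * ∏ i, y i = 0
  zify [hzeros] at hcard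
  rw [Nat.add_sub_cancel_left, ← hcard]
  exact weight_ne_zero_and (by simp) α

theorem card_hasValueType (hhk : h ≤ k) {l j : ℕ} {r : Fin l → ℕ} (hr : ∀ m, 1 ≤ r m)
    (hsum : ∑ m, r m ≤ h) {ι : Fin j → ℕ} (hι : IsOfType r ι) :
    Nat.card {α : Fin k → F // HasValueType h (h - ∑ m, r m) r α}
      = h.choose (∑ m, r m) * ((∑ m, r m).factorial / ∏ m, (r m).factorial)
        * (l.factorial / ∏ t, (ι t).factorial) * (Fintype.card F - 1).choose l := by
  classical
  obtain ⟨d, rfl⟩ := Nat.exists_eq_add_of_le hhk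
  have hcard := card_exists_hasProfile (F := F) (J := Fin h) hr (by rwa [Fintype.card_fin]) hι
  rw [Fintype.card_fin] at hcard
  simp only [hasValueType_iff]
  rw [← hcard, card_tail_eq_zero_and_head fun a => ∃ β, HasProfile (h - ∑ m, r m) r β a]

theorem weight_definingSet_of_hasValueType (hhk : h ≤ k) {s l : ℕ} {r : Fin l → ℕ} (hs1 : 1 ≤ s)
    (hsh : s ≤ h) {α : Fin k → F} (hα : HasValueType h (h - s) r α) :
    (weight (definingSet F hhk) α : ℤ) = Nat.card (definingSet F hhk)
      - ((Fintype.card F : ℤ) ^ (k - 1)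
        - ((Fintype.card F : ℤ) - 1) ^ (h - s) * (Fintype.card F : ℤ) ^ (k - h)
          * psi (Fintype.card F) s
        + (Fintype.card F : ℤ) ^ (k - h)
          * Atup (Fintype.card F) (List.ofFn r ++ [h - s])) + 1 := by
  classical
  obtain ⟨d, rfl⟩ := Nat.exists_eq_add_of_le hhk
  obtain ⟨htail, β, hprof⟩ := hasValueType_iff.mp hα
  have hzeros := hprof.card_sum_mul_prod_eq_zero_and_sum_mul_eq_zero
    (by rw [Fintype.card_fin, Nat.add_sub_cancel' hsh]) (Nat.one_le_iff_ne_zero.mp hs1)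
  rw [Fintype.card_fin] at hzeros
  have hcard := card_head_and_sum_mul_eq_zero_of_tail_eq_zero α (fun i => htail _ (by simp))
    fun y => (∑ i, y i) * ∏ i, y i = 0
  zify [hzeros] at hcard
  have hpow : (Fintype.card F : ℤ) ^ (h + d - 1)
      = Fintype.card F ^ d * Fintype.card F ^ (h - 1) := by
    rw [← pow_add]
    congr 1
    lia
  have hcount : (Fintype.card F : ℤ) ^ (h + d - 1)
      - ((Fintype.card F : ℤ) - 1) ^ (h - s) * (Fintype.card F : ℤ) ^ d * psi (Fintype.card F) s
      + (Fintype.card F : ℤ) ^ d * Atup (Fintype.card F) (List.ofFn r ++ [h - s])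
        = #{P : Fin (h + d) → F | (∑ i, P (Fin.castAdd d i)) * ∏ i, P (Fin.castAdd d i) = 0 ∧
          ∑ i, α i * P i = 0} := by
    rw [hcard, hpow]
    ring
  rw [Nat.add_sub_cancel_left, hcount]
  exact weight_ne_zero_and (by simp) α

end Weights

theorem stmt7_general {F : Type*} [Field F] [Fintype F] {h k : ℕ} (hhk : h ≤ k) :
    (Nat.card {α : Fin k → F // ∃ i : Fin k, h ≤ (i : ℕ) ∧ α i ≠ 0}
        = Fintype.card F ^ k - Fintype.card F ^ h ∧
      ∀ α : Fin k → F, (∃ i : Fin k, h ≤ (i : ℕ) ∧ α i ≠ 0) →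
        (weight (definingSet F hhk) α : ℤ) = Nat.card (definingSet F hhk)
          - (Fintype.card F : ℤ) ^ (k - h - 1) * ((Fintype.card F : ℤ) ^ h
            + psi (Fintype.card F) h - ((Fintype.card F : ℤ) - 1) ^ h) + 1) ∧
    ∀ s, 1 ≤ s → s ≤ h → ∀ l, ∀ r : Fin l → ℕ, (∀ m, 1 ≤ r m) → ∑ m, r m = s →
      ∀ j, ∀ ι : Fin j → ℕ, IsOfType r ι →
        Nat.card {α : Fin k → F // HasValueType h (h - s) r α}
          = h.choose s * (s.factorial / ∏ m, (r m).factorial)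
            * (l.factorial / ∏ t, (ι t).factorial) * (Fintype.card F - 1).choose l ∧
        ∀ α : Fin k → F, HasValueType h (h - s) r α →
          (weight (definingSet F hhk) α : ℤ) = Nat.card (definingSet F hhk)
            - ((Fintype.card F : ℤ) ^ (k - 1)
              - ((Fintype.card F : ℤ) - 1) ^ (h - s) * (Fintype.card F : ℤ) ^ (k - h)
                * psi (Fintype.card F) s
              + (Fintype.card F : ℤ) ^ (k - h)
                * Atup (Fintype.card F) (List.ofFn r ++ [h - s])) + 1 := by
  refine ⟨⟨card_exists_tail_ne_zero hhk, fun α => weight_definingSet_of_tail_ne_zero hhk⟩, ?_⟩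
  rintro s hs1 hsh l r hr rfl j ι hι
  exact ⟨card_hasValueType hhk hr hsh hι, fun α => weight_definingSet_of_hasValueType hhk hs1 hsh⟩

theorem stmt7 (q : ℕ) (F : Type*) [Field F] [Fintype F] (hF : Fintype.card F = q)
    (k h : ℕ) (hh : 4 ≤ h) (hhk : h < k)
    (D1 : Set (Fin k → F))
    (hD1 : D1 = {x | x ≠ 0 ∧
      (∑ i : Fin h, x (Fin.castLE hhk.le i)) * ∏ i : Fin h, x (Fin.castLE hhk.le i) = 0})
    (n : ℕ) (hn : n = Nat.card D1) :
    -- (i)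
    (Nat.card {α : Fin k → F // ∃ i : Fin k, h ≤ (i : ℕ) ∧ α i ≠ 0} = q ^ k - q ^ h ∧
      ∀ α : Fin k → F, (∃ i : Fin k, h ≤ (i : ℕ) ∧ α i ≠ 0) →
        (Nat.card {P : Fin k → F // P ∈ D1 ∧ ∑ i, α i * P i ≠ 0} : ℤ)
          = (n : ℤ) - (q : ℤ) ^ (k - h - 1) * ((q : ℤ) ^ h + psi q h - ((q : ℤ) - 1) ^ h) + 1)
    ∧
    -- (ii)
    (∀ s : ℕ, 1 ≤ s → s ≤ h →
      ∀ l : ℕ, ∀ r : Fin l → ℕ, (∀ m, 1 ≤ r m) → (∑ m, r m) = s →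
      ∀ j : ℕ, ∀ ι : Fin j → ℕ,
        (∃ v : Fin j → ℕ, Function.Injective v ∧ (∀ m : Fin l, ∃ t, r m = v t) ∧
            ∀ t, ι t = Nat.card {m : Fin l // r m = v t}) →
        (Nat.card {α : Fin k → F //
            (∀ i : Fin k, h ≤ (i : ℕ) → α i = 0) ∧
            Nat.card {i : Fin k // (i : ℕ) < h ∧ α i = 0} = h - s ∧
            ∃ β : Fin l → F, Function.Injective β ∧ (∀ m, β m ≠ 0) ∧
              (∀ i : Fin k, α i ≠ 0 → ∃ m, α i = β m) ∧
              ∀ m, Nat.card {i : Fin k // α i = β m} = r m}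
          = Nat.choose h s * (Nat.factorial s / ∏ m, Nat.factorial (r m))
              * (Nat.factorial l / ∏ t, Nat.factorial (ι t)) * Nat.choose (q - 1) l) ∧
        ∀ α : Fin k → F,
          ((∀ i : Fin k, h ≤ (i : ℕ) → α i = 0) ∧
            Nat.card {i : Fin k // (i : ℕ) < h ∧ α i = 0} = h - s ∧
            ∃ β : Fin l → F, Function.Injective β ∧ (∀ m, β m ≠ 0) ∧
              (∀ i : Fin k, α i ≠ 0 → ∃ m, α i = β m) ∧
              ∀ m, Nat.card {i : Fin k // α i = β m} = r m) →
          (Nat.card {P : Fin k → F // P ∈ D1 ∧ ∑ i, α i * P i ≠ 0} : ℤ)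
            = (n : ℤ) - ((q : ℤ) ^ (k - 1)
                - ((q : ℤ) - 1) ^ (h - s) * (q : ℤ) ^ (k - h) * psi q s
                + (q : ℤ) ^ (k - h) * Atup q (List.ofFn r ++ [h - s])) + 1) := by
  subst hF hn hD1
  exact stmt7_general hhk.le
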